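/- arXiv:1305.0744 — 2 statements merged into one kernel-verified Lean document; each statement's English description precedes it below -/
import Mathlib

section
/- Let G be an infinite locally soluble group with G ≠ G' (G is not equal to its derived subgroup) and let A be a ℤG-module with C_G(A) = 1, where ℤ is the ring of integers. If A/C_A(G) is not a minimax ℤ-module and A/C_A(H) is a minimax ℤ-module for every proper subgroup H of G, then G is isomorphic to a quasi-cyclic q-group C_{q^∞} for some prime q. -/
/-- `C_A(H)`: the `R`-submodule of `A` consisting of the elements fixed by every
element of the subgroup `H` of `G`. -/
def moduleCentralizer (R : Type*) [Ring R] {G : Type*} [Group G] (A : Type*)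
    [AddCommGroup A] [Module R A] [DistribMulAction G A] [SMulCommClass G R A]
    (H : Subgroup G) : Submodule R A where
  carrier := {a | ∀ g ∈ H, g • a = a}
  add_mem' := fun {a b} ha hb g hg => by rw [smul_add, ha g hg, hb g hg]
  zero_mem' := fun g _ => smul_zero g
  smul_mem' := fun r a ha g hg => by rw [smul_comm, ha g hg]

/-- An `R`-module is minimax if it has a finite series of submodules each of whose
factors is either a Noetherian `R`-module or an Artinian `R`-module. -/
def Module.IsMinimax (R M : Type*) [Ring R] [AddCommGroup M] [Module R M] : Prop :=
  ∃ (n : ℕ) (f : Fin (n + 1) → Submodule R M),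
    Monotone f ∧ f 0 = ⊥ ∧ f (Fin.last n) = ⊤ ∧
    ∀ i : Fin n,
      IsNoetherian R (↥(f i.succ) ⧸ Submodule.comap (f i.succ).subtype (f i.castSucc)) ∨
      IsArtinian R (↥(f i.succ) ⧸ Submodule.comap (f i.succ).subtype (f i.castSucc))

/-- The quasi-cyclic (Prüfer) `q`-group `C_{q^∞}`: the `q`-primary component of `ℚ/ℤ`. -/
def PruferGroup (q : ℕ) (hq : q.Prime) :
    AddSubgroup (ℚ ⧸ AddSubgroup.zmultiples (1 : ℚ)) :=
  haveI : Fact q.Prime := ⟨hq⟩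
  AddCommGroup.primaryComponent (ℚ ⧸ AddSubgroup.zmultiples (1 : ℚ)) q

namespace MMX

def Dvb (B : Type*) [AddCommGroup B] : Prop := ∀ p : ℕ, p.Prime → ∀ x : B, ∃ y : B, p • y = x

def AInd (B : Type*) [AddCommGroup B] : Prop :=
  ∀ H K : AddSubgroup B, H ⊔ K = ⊤ → H = ⊤ ∨ K = ⊤

lemma Dvb.nat {B : Type*} [AddCommGroup B] (h : Dvb B) (n : ℕ) (hn : n ≠ 0) :
    ∀ x : B, ∃ y : B, n • y = x := by
  induction n using Nat.recOnMul with
  | zero => exact absurd rfl hn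
  | one => exact fun x => ⟨x, one_smul _ _⟩
  | prime p hp => exact h p hp
  | mul a b iha ihb =>
    intro x
    obtain ⟨y, hy⟩ := iha (by rintro rfl; simp at hn) x
    obtain ⟨z, hz⟩ := ihb (by rintro rfl; simp at hn) y
    exact ⟨z, by rw [mul_smul, hz, hy]⟩

lemma Dvb.baer {B : Type*} [AddCommGroup B] (h : Dvb B) : Module.Baer ℤ B := by
  have : ∀ {n : ℤ}, n ≠ 0 → Function.Surjective (fun x : B => n • x) := by
    intro n hn x
    obtain ⟨y, hy⟩ := h.nat n.natAbs (by simpa using hn) x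
    rcases Int.natAbs_eq n with e | e
    · exact ⟨y, by simp only; rw [e, natCast_zsmul]; exact hy⟩
    · exact ⟨-y, by simp only; rw [e, smul_neg, neg_smul, neg_neg, natCast_zsmul]; exact hy⟩
  have : DivisibleBy B ℤ := divisibleByOfSMulRightSurj _ _ this
  exact Module.Baer.of_divisible B

lemma AInd.eq_top {B : Type*} [AddCommGroup B] (h : AInd B) (D : AddSubgroup B) (hD : Dvb D)
    (hne : D ≠ ⊥) : D = ⊤ := by
  obtain ⟨r, hr⟩ := hD.baer.extension_property_addMonoidHom D.subtype D.subtype_injective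
    (AddMonoidHom.id D)
  have hr' : ∀ d : D, r d = d := fun d => DFunLike.congr_fun hr d
  rcases h D r.ker (by
    rw [eq_top_iff]
    intro x _
    have : x = r x + (x - r x) := by abel
    rw [this]
    exact AddSubgroup.add_mem_sup (r x).2 (by simp [AddMonoidHom.mem_ker, hr'])) with h | h
  · exact h
  · exfalso
    apply hne
    rw [eq_bot_iff]
    intro x hx
    have h1 := hr' ⟨x, hx⟩
    have : x ∈ r.ker := by rw [h]; trivial
    rw [AddMonoidHom.mem_ker] at this
    simp only at h1
    rw [this] at h1
    simpa using (congrArg Subtype.val h1).symm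

lemma mem_prim {B : Type*} [AddCommGroup B] {p : ℕ} [hp : Fact p.Prime] (x : B) :
    x ∈ AddCommGroup.primaryComponent B p ↔ ∃ k : ℕ, p ^ k • x = 0 := by
  exact Iff.rfl

lemma coprime_kill {B : Type*} [AddCommGroup B] {m n : ℕ} (h : m.Coprime n) {x : B}
    (hm : m • x = 0) (hn : n • x = 0) : x = 0 := by
  have h1 := addOrderOf_dvd_of_nsmul_eq_zero hm
  have h2 := addOrderOf_dvd_of_nsmul_eq_zero hn
  have := Nat.dvd_gcd h1 h2
  rw [h] at this
  exact AddMonoid.addOrderOf_eq_one_iff.1 (Nat.dvd_one.1 this)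

lemma Dvb.prim {B : Type*} [AddCommGroup B] (h : Dvb B) (p : ℕ) [hp : Fact p.Prime] :
    Dvb (AddCommGroup.primaryComponent B p) := by
  rintro q hq ⟨x, hx⟩
  obtain ⟨k, hk⟩ := (mem_prim x).1 hx
  by_cases hqp : q = p
  · subst hqp
    obtain ⟨y, hy⟩ := h q hq x
    exact ⟨⟨y, (mem_prim y).2 ⟨k + 1, by rw [pow_succ, mul_smul, hy, hk]⟩⟩, Subtype.ext hy⟩
  · have hc : IsCoprime (q : ℤ) ((p ^ k : ℕ) : ℤ) :=
      Nat.isCoprime_iff_coprime.2 (Nat.Coprime.pow_right _ ((Nat.coprime_primes hq hp.out).2 hqp))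
    obtain ⟨u, v, huv⟩ := hc
    refine ⟨u • ⟨x, hx⟩, Subtype.ext ?_⟩
    have h1 : (u * q + v * (p ^ k : ℕ)) • x = x := by rw [huv, one_smul]
    rw [add_smul, mul_smul v, natCast_zsmul, hk, smul_zero, add_zero, mul_comm, mul_smul,
      natCast_zsmul] at h1
    simpa using h1

lemma AInd.quot {B : Type*} [AddCommGroup B] (h : AInd B) (N : AddSubgroup B) : AInd (B ⧸ N) := by
  intro H K hHK
  have hs := QuotientAddGroup.mk'_surjective N
  have key : H.comap (QuotientAddGroup.mk' N) ⊔ K.comap (QuotientAddGroup.mk' N) = ⊤ := by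
    rw [AddSubgroup.comap_sup_eq _ _ _ hs, hHK, AddSubgroup.comap_top]
  rcases h _ _ key with h | h
  · left
    exact AddSubgroup.comap_injective hs (by rw [h, AddSubgroup.comap_top])
  · right
    exact AddSubgroup.comap_injective hs (by rw [h, AddSubgroup.comap_top])

lemma Dvb.surj {B C : Type*} [AddCommGroup B] [AddCommGroup C] (h : Dvb B) (f : B →+ C)
    (hf : Function.Surjective f) : Dvb C := by
  intro p hp x
  obtain ⟨y, rfl⟩ := hf x
  obtain ⟨z, rfl⟩ := h p hp y
  exact ⟨f z, by simp⟩

lemma exists_prime_tors {B : Type*} [AddCommGroup B] [Nontrivial B] (hd : Dvb B) (hi : AInd B) :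
    ∃ p : ℕ, p.Prime ∧ ∃ x : B, x ≠ 0 ∧ p • x = 0 := by
  by_contra hcon
  push Not at hcon
  have tf : ∀ n : ℕ, n ≠ 0 → ∀ x : B, n • x = 0 → x = 0 := by
    intro n hn
    induction n using Nat.recOnMul with
    | zero => exact absurd rfl hn
    | one => intro x hx; simpa using hx
    | prime p hp => intro x hx; by_contra h0; exact hcon p hp x h0 hx
    | mul a b iha ihb =>
      intro x hx
      rw [mul_smul] at hx
      exact ihb (by rintro rfl; simp at hn) _ (iha (by rintro rfl; simp at hn) _ hx)
  obtain ⟨x, hx⟩ := exists_ne (0 : B)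
  let N := AddSubgroup.zmultiples x
  have key : ∀ p : ℕ, p.Prime → ∃ c : B ⧸ N, c ≠ 0 ∧ p • c = 0 := by
    intro p hp
    obtain ⟨y, hy⟩ := hd p hp x
    refine ⟨QuotientAddGroup.mk' N y, ?_, ?_⟩
    · intro h0
      rw [QuotientAddGroup.mk'_apply, QuotientAddGroup.eq_zero_iff] at h0
      obtain ⟨k, hk⟩ := h0
      simp only at hk
      have h1 : ((p : ℤ) * k - 1) • x = 0 := by
        rw [sub_smul, mul_smul, hk, natCast_zsmul, hy, one_smul, sub_self]
      have h2 : (p : ℤ) * k - 1 ≠ 0 := by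
        intro h3
        have : (p : ℤ) ∣ 1 := ⟨k, by linarith⟩
        have : p ∣ 1 := by exact_mod_cast this
        exact hp.one_lt.ne' (Nat.dvd_one.1 this)
      have h3 : ((p : ℤ) * k - 1).natAbs • x = 0 := by
        rcases Int.natAbs_eq ((p : ℤ) * k - 1) with e | e
        · rw [e, natCast_zsmul] at h1; exact h1
        · rw [e, neg_smul, natCast_zsmul, neg_eq_zero] at h1; exact h1
      exact hx (tf _ (by simpa using h2) _ h3)
    · rw [← map_nsmul, hy, QuotientAddGroup.mk'_apply, QuotientAddGroup.eq_zero_iff]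
      exact AddSubgroup.mem_zmultiples x
  obtain ⟨c, hc, hc2⟩ := key 2 Nat.prime_two
  obtain ⟨d, hd0, hd3⟩ := key 3 Nat.prime_three
  have : Fact (Nat.Prime 3) := ⟨Nat.prime_three⟩
  have hdq : Dvb (B ⧸ N) := hd.surj _ (QuotientAddGroup.mk'_surjective N)
  have htop := (hi.quot N).eq_top _ (hdq.prim 3) (by
    intro h
    have : d ∈ AddCommGroup.primaryComponent (B ⧸ N) 3 := (mem_prim d).2 ⟨1, by simpa using hd3⟩
    rw [h] at this
    exact hd0 (by simpa using this))
  have hc3 : c ∈ AddCommGroup.primaryComponent (B ⧸ N) 3 := by rw [htop]; trivial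
  obtain ⟨k, hk⟩ := (mem_prim c).1 hc3
  exact hc (coprime_kill (Nat.Coprime.pow_right k (by norm_num)) hc2 hk)

lemma dual_aux (F : Type*) [Field F] {V : Type*} [AddCommGroup V] [Module F V] (x : V)
    (h : ∀ φ : V →ₗ[F] F, φ x = 0) : x = 0 :=
  (Module.forall_dual_apply_eq_zero_iff F x).1 h

lemma dvb_of_noFI {B : Type*} [AddCommGroup B]
    (hfi : ∀ H : AddSubgroup B, H.FiniteIndex → H = ⊤) : Dvb B := by
  intro p hp x
  have : Fact p.Prime := ⟨hp⟩
  let N : AddSubgroup B := (nsmulAddMonoidHom p : B →+ B).range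
  let : Module (ZMod p) (B ⧸ N) := AddCommGroup.zmodModule (by
    intro y
    obtain ⟨z, rfl⟩ := QuotientAddGroup.mk'_surjective N y
    rw [← map_nsmul, QuotientAddGroup.mk'_apply, QuotientAddGroup.eq_zero_iff]
    exact ⟨z, rfl⟩)
  by_contra hx
  have h0 : QuotientAddGroup.mk' N x ≠ 0 := by
    rw [QuotientAddGroup.mk'_apply, Ne, QuotientAddGroup.eq_zero_iff]
    rintro ⟨y, hy⟩
    exact hx ⟨y, hy⟩
  apply h0
  refine dual_aux (ZMod p) (QuotientAddGroup.mk' N x) fun φ => ?_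
  let g : B →+ ZMod p := φ.toAddMonoidHom.comp (QuotientAddGroup.mk' N)
  have : Finite (B ⧸ g.ker) := Finite.of_injective _ (QuotientAddGroup.kerLift_injective g)
  have := hfi g.ker AddSubgroup.finiteIndex_of_finite_quotient
  have hxk : x ∈ g.ker := by rw [this]; trivial
  exact hxk

lemma classify {B : Type*} [AddCommGroup B] [Nontrivial B] (hd : Dvb B) (hi : AInd B) :
    ∃ (q : ℕ) (hq : q.Prime), Nonempty (PruferGroup q hq ≃+ B) := by
  obtain ⟨p, hp, x, hx, hpx⟩ := exists_prime_tors hd hi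
  refine ⟨p, hp, ?_⟩
  have : Fact p.Prime := ⟨hp⟩
  have hp0 : (p : ℚ) ≠ 0 := by exact_mod_cast hp.ne_zero
  let i : ℤ →+ ℚ := (zmultiplesHom ℚ) (1 / p : ℚ)
  have hiinj : Function.Injective i := by
    intro a b hab
    simp only [i, zmultiplesHom_apply, zsmul_eq_mul] at hab
    have := mul_right_cancel₀ (one_div_ne_zero hp0) hab
    exact_mod_cast this
  obtain ⟨g, hg⟩ := hd.baer.extension_property_addMonoidHom i hiinj (zmultiplesHom B x)
  have hg1 : g (1 / p) = x := by simpa [i] using DFunLike.congr_fun hg 1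
  have hg0 : g 1 = 0 := by
    have : (1 : ℚ) = p • (1 / p : ℚ) := by rw [nsmul_eq_mul]; field_simp
    rw [this, map_nsmul, hg1, hpx]
  let f0 : ℚ ⧸ AddSubgroup.zmultiples (1 : ℚ) →+ B := QuotientAddGroup.lift _ g (by
    rw [AddSubgroup.zmultiples_le]; exact hg0)
  let f : PruferGroup p hp →+ B := f0.comp (PruferGroup p hp).subtype
  have hdP : Dvb (PruferGroup p hp) := by
    refine Dvb.prim ?_ p
    refine Dvb.surj (B := ℚ) ?_ _ (QuotientAddGroup.mk'_surjective _)
    intro q hq y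
    have hq0 : (q : ℚ) ≠ 0 := by exact_mod_cast hq.ne_zero
    exact ⟨y / q, by rw [nsmul_eq_mul]; field_simp⟩
  let e : ℚ ⧸ AddSubgroup.zmultiples (1 : ℚ) := QuotientAddGroup.mk' _ (1 / p : ℚ)
  have hfe : f0 e = x := hg1
  have heP : e ∈ PruferGroup p hp := by
    refine (mem_prim _).2 ⟨1, ?_⟩
    rw [pow_one, ← map_nsmul, QuotientAddGroup.mk'_apply, QuotientAddGroup.eq_zero_iff]
    exact ⟨1, by simp only [nsmul_eq_mul]; field_simp; norm_num⟩
  have hsurj : Function.Surjective f := by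
    rw [← AddMonoidHom.range_eq_top]
    apply hi.eq_top _ (hdP.surj f.rangeRestrict f.rangeRestrict_surjective)
    intro h
    have : f ⟨e, heP⟩ ∈ f.range := ⟨_, rfl⟩
    rw [h, AddSubgroup.mem_bot] at this
    exact hx (hfe.symm.trans this)
  have hinj : Function.Injective f := by
    rw [injective_iff_map_eq_zero]
    rintro ⟨y, hy⟩ hy0
    have hy0 : f0 y = 0 := hy0
    by_contra hne
    have hne : y ≠ 0 := fun h => hne (Subtype.ext h)
    have hex : ∃ k : ℕ, p ^ k • y = 0 := (mem_prim y).1 hy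
    classical
    set k := Nat.find hex with hk
    have hk0 : k ≠ 0 := by
      intro h
      have := Nat.find_spec hex
      rw [← hk, h] at this
      exact hne (by simpa using this)
    obtain ⟨j, hj⟩ := Nat.exists_eq_succ_of_ne_zero hk0
    have hj1 : p ^ j • y ≠ 0 := Nat.find_min hex (by omega)
    have hj2 : p • (p ^ j • y) = 0 := by
      rw [← mul_smul, ← pow_succ']
      have := Nat.find_spec hex
      rwa [← hk, hj] at this
    have hz0 : f0 (p ^ j • y) = 0 := by rw [map_nsmul, hy0, smul_zero]
    generalize p ^ j • y = z at hj1 hj2 hz0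
    obtain ⟨r, rfl⟩ := QuotientAddGroup.mk'_surjective _ z
    rw [← map_nsmul, QuotientAddGroup.mk'_apply, QuotientAddGroup.eq_zero_iff] at hj2
    obtain ⟨m, hm⟩ := hj2
    simp only [zsmul_eq_mul, mul_one, nsmul_eq_mul] at hm
    have hr : r = m • (1 / p : ℚ) := by rw [zsmul_eq_mul, hm]; field_simp
    have hz : QuotientAddGroup.mk' (AddSubgroup.zmultiples (1 : ℚ)) r = m • e := by
      rw [hr, map_zsmul]
    rw [hz] at hj1 hz0
    have hmx : m • x = 0 := by rw [← hfe, ← map_zsmul, hz0]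
    have hep : p • e = 0 := by
      have h := (mem_prim e).1 heP
      rw [← map_nsmul, QuotientAddGroup.mk'_apply, QuotientAddGroup.eq_zero_iff]
      exact ⟨1, by simp only [nsmul_eq_mul]; field_simp; norm_num⟩
    by_cases hpm : (p : ℤ) ∣ m
    · obtain ⟨t, rfl⟩ := hpm
      apply hj1
      rw [mul_comm, mul_smul, natCast_zsmul, hep, smul_zero]
    · have hc : IsCoprime (p : ℤ) m :=
        (Nat.prime_iff_prime_int.1 hp).coprime_iff_not_dvd.2 hpm
      obtain ⟨u, v, huv⟩ := hc
      apply hx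
      rw [← one_smul ℤ x, ← huv, add_smul, mul_smul, mul_smul, hmx, natCast_zsmul, hpx]
      simp
  exact ⟨AddEquiv.ofBijective f ⟨hinj, hsurj⟩⟩

end MMX

namespace MMX

structure Good (M : Type*) [AddCommGroup M] : Prop where
  fin_tors : ∀ p : ℕ, p.Prime → {x : M | p • x = 0}.Finite
  fin_quot : ∀ p : ℕ, p.Prime → ∃ S : Set M, S.Finite ∧ ∀ x, ∃ s ∈ S, ∃ y, x = s + p • y
  bound : ∃ N : ℕ, ∀ p : ℕ, p.Prime → N ≤ p → (∀ x : M, p • x = 0 → x = 0) ∧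
    ∀ x : M, (∀ k : ℕ, ∃ y : M, p ^ k • y = x) → ∃ n : ℕ, n ≠ 0 ∧ n • x = 0

lemma finite_aux (F : Type*) [Field F] [Finite F] {V : Type*} [AddCommGroup V] [Module F V]
    (_ : IsNoetherian F V) : Finite V := Module.finite_of_finite F

lemma finite_of_killed {p : ℕ} (hp : p.Prime) (V : Type*) [AddCommGroup V] (hV : ∀ x : V, p • x = 0) (h : IsNoetherian ℤ V ∨ IsArtinian ℤ V) : Finite V := by
  have : Fact p.Prime := ⟨hp⟩
  let : Module (ZMod p) V := AddCommGroup.zmodModule hV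
  have h' : IsNoetherian (ZMod p) V := by
    rcases h with h | h
    · exact isNoetherian_of_tower ℤ h
    · exact IsSemiprimaryRing.isNoetherian_iff_isArtinian.2 (isArtinian_of_tower ℤ h)
  exact finite_aux (ZMod p) h'

lemma good_fin {M : Type*} [AddCommGroup M] (h : IsNoetherian ℤ M ∨ IsArtinian ℤ M)
    (p : ℕ) (hp : p.Prime) : {x : M | p • x = 0}.Finite ∧
    ∃ S : Set M, S.Finite ∧ ∀ x, ∃ s ∈ S, ∃ y, x = s + p • y := by
  constructor
  · let T : Submodule ℤ M := Submodule.torsionBy ℤ M (p : ℤ)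
    have : Finite T := finite_of_killed hp T (by
      rintro ⟨x, hx⟩
      apply Subtype.ext
      have : (p : ℤ) • x = 0 := hx
      rw [Nat.cast_smul_eq_nsmul] at this
      simpa using this) (by
      rcases h with h | h
      · left; infer_instance
      · right; infer_instance)
    refine Set.Finite.subset (Set.toFinite (T : Set M)) ?_
    intro x hx
    change (p : ℤ) • x = 0
    rw [Nat.cast_smul_eq_nsmul]
    exact hx
  · let T : Submodule ℤ M := LinearMap.range (LinearMap.lsmul ℤ M (p : ℤ))
    have : Finite (M ⧸ T) := finite_of_killed hp (M ⧸ T) (by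
      intro x
      obtain ⟨x, rfl⟩ := T.mkQ_surjective x
      rw [← map_nsmul, Submodule.mkQ_apply, Submodule.Quotient.mk_eq_zero]
      exact ⟨x, by simp [Nat.cast_smul_eq_nsmul]⟩) (by
      rcases h with h | h
      · left; infer_instance
      · right; infer_instance)
    refine ⟨Set.range (Quotient.out : M ⧸ T → M), Set.finite_range _, fun x => ?_⟩
    refine ⟨_, ⟨T.mkQ x, rfl⟩, ?_⟩
    have h1 : x - (T.mkQ x).out ∈ T := by
      rw [← Submodule.Quotient.mk_eq_zero, Submodule.Quotient.mk_sub, sub_eq_zero]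
      exact (Quotient.out_eq (T.mkQ x)).symm
    obtain ⟨y, hy⟩ := h1
    refine ⟨y, ?_⟩
    rw [LinearMap.lsmul_apply, Nat.cast_smul_eq_nsmul] at hy
    rw [hy]; abel

lemma coprime_fact {p : ℕ} (hp : p.Prime) : p.Coprime (p - 1).factorial := by
  rw [Nat.Prime.coprime_iff_not_dvd hp, hp.dvd_factorial]
  have := hp.pos
  omega

lemma good_noeth {M : Type*} [AddCommGroup M] (h : IsNoetherian ℤ M) : Good M := by
  refine ⟨fun p hp => (good_fin (.inl h) p hp).1, fun p hp => (good_fin (.inl h) p hp).2, ?_⟩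
  let g : ℕ →o Submodule ℤ M :=
    ⟨fun n => Submodule.torsionBy ℤ M (n.factorial : ℤ), by
      intro a b hab
      apply Submodule.torsionBy_le_torsionBy_of_dvd
      exact_mod_cast Nat.factorial_dvd_factorial hab⟩
  have hg : ∀ n x, x ∈ g n ↔ n.factorial • x = 0 := by
    intro n x
    rw [← Nat.cast_smul_eq_nsmul ℤ]
    exact Iff.rfl
  obtain ⟨N, hN⟩ := monotone_stabilizes_iff_noetherian.mpr h g
  refine ⟨N + 1, fun p hp hNp => ⟨fun x hx => ?_, fun x hx => ?_⟩⟩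
  · have h1 : x ∈ g p := by
      rw [hg]
      obtain ⟨c, hc⟩ := Nat.dvd_factorial hp.pos le_rfl
      rw [hc, mul_comm, mul_smul, hx, smul_zero]
    rw [← hN p (by omega), hN (p - 1) (by omega), hg] at h1
    exact coprime_kill (coprime_fact hp) hx h1
  · have h2 : x ∈ (⨅ i : ℕ, (Ideal.span {(p : ℤ)}) ^ i • ⊤ : Submodule ℤ M) := by
      rw [Submodule.mem_iInf]
      intro i
      obtain ⟨y, rfl⟩ := hx i
      rw [← Nat.cast_smul_eq_nsmul ℤ]
      apply Submodule.smul_mem_smul _ Submodule.mem_top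
      push_cast
      exact Ideal.pow_mem_pow (Ideal.mem_span_singleton_self _) i
    rw [Ideal.mem_iInf_smul_pow_eq_bot_iff] at h2
    obtain ⟨⟨r, hr⟩, hrx⟩ := h2
    rw [Ideal.mem_span_singleton] at hr
    have hrx : r • x = x := hrx
    refine ⟨(r - 1).natAbs, ?_, ?_⟩
    · intro h0
      rw [Int.natAbs_eq_zero, sub_eq_zero] at h0
      rw [h0] at hr
      have : p ∣ 1 := by exact_mod_cast hr
      exact hp.one_lt.ne' (Nat.dvd_one.1 this)
    · have h3 : (r - 1) • x = 0 := by rw [sub_smul, hrx, one_smul, sub_self]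
      rw [← Nat.cast_smul_eq_nsmul ℤ]
      rcases Int.natAbs_eq (r - 1) with e | e
      · rw [← e]; exact h3
      · rw [e, neg_smul, neg_eq_zero] at h3; exact h3

lemma good_artin {M : Type*} [AddCommGroup M] (h : IsArtinian ℤ M) : Good M := by
  refine ⟨fun p hp => (good_fin (.inr h) p hp).1, fun p hp => (good_fin (.inr h) p hp).2, ?_⟩
  let g0 : ℕ → Submodule ℤ M := fun n =>
    { carrier := {x | ∃ m : ℕ, m.Coprime n.factorial ∧ m • x = 0}
      add_mem' := by
        rintro a b ⟨m, hm, hma⟩ ⟨k, hk, hkb⟩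
        refine ⟨m * k, hm.mul_left hk, ?_⟩
        rw [smul_add, mul_smul m k b, hkb, mul_comm, mul_smul, hma]
        simp
      zero_mem' := ⟨1, Nat.coprime_one_left _, by simp⟩
      smul_mem' := by
        rintro c x ⟨m, hm, hmx⟩
        refine ⟨m, hm, ?_⟩
        rw [smul_comm, hmx, smul_zero] }
  let g : ℕ →o (Submodule ℤ M)ᵒᵈ :=
    ⟨fun n => OrderDual.toDual (g0 n), by
      intro a b hab
      change g0 b ≤ g0 a
      rintro x ⟨m, hm, hmx⟩
      exact ⟨m, hm.coprime_dvd_right (Nat.factorial_dvd_factorial hab), hmx⟩⟩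
  obtain ⟨N, hN⟩ := IsArtinian.monotone_stabilizes g
  have hN : ∀ m, N ≤ m → g0 N = g0 m := hN
  refine ⟨N + 1, fun p hp hNp => ⟨fun x hx => ?_, fun x _ => ?_⟩⟩
  · have h1 : x ∈ g0 (p - 1) := ⟨p, coprime_fact hp, hx⟩
    rw [← hN (p - 1) (by omega), hN p (by omega)] at h1
    obtain ⟨m, hm, hmx⟩ := h1
    exact coprime_kill (hm.coprime_dvd_right (Nat.dvd_factorial hp.pos le_rfl)) hmx hx
  · let f : ℕ →o (Submodule ℤ M)ᵒᵈ :=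
      ⟨fun n => OrderDual.toDual (Submodule.span ℤ {(2 ^ n : ℤ) • x}), by
        intro a b hab
        change Submodule.span ℤ {(2 ^ b : ℤ) • x} ≤ Submodule.span ℤ {(2 ^ a : ℤ) • x}
        rw [Submodule.span_singleton_le_iff_mem, Submodule.mem_span_singleton]
        refine ⟨2 ^ (b - a), ?_⟩
        rw [smul_smul, ← pow_add]
        congr 2
        omega⟩
    obtain ⟨k, hk⟩ := IsArtinian.monotone_stabilizes f
    have hk : Submodule.span ℤ {(2 ^ k : ℤ) • x} = Submodule.span ℤ {(2 ^ (k + 1) : ℤ) • x} :=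
      hk (k + 1) (by omega)
    have h1 : (2 ^ k : ℤ) • x ∈ Submodule.span ℤ {(2 ^ (k + 1) : ℤ) • x} := by
      rw [← hk]; exact Submodule.mem_span_singleton_self _
    obtain ⟨c, hc⟩ := Submodule.mem_span_singleton.1 h1
    rw [smul_smul, ← sub_eq_zero, ← sub_smul] at hc
    have h0 : c * 2 ^ (k + 1) - 2 ^ k ≠ 0 := by
      have : c * 2 ^ (k + 1) - 2 ^ k = 2 ^ k * (2 * c - 1) := by ring
      rw [this]
      exact mul_ne_zero (by positivity) (by omega)
    refine ⟨_, Int.natAbs_ne_zero.2 h0, ?_⟩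
    rw [← Nat.cast_smul_eq_nsmul ℤ]
    rcases Int.natAbs_eq (c * 2 ^ (k + 1) - 2 ^ k) with e | e
    · rw [← e]; exact hc
    · rw [e, neg_smul, neg_eq_zero] at hc; exact hc

lemma good_noeth' {M : Type*} [AddCommGroup M] {inst : Module ℤ M}
    (h : @IsNoetherian ℤ M _ _ inst) : Good M := by
  obtain rfl : inst = AddCommGroup.toIntModule M := Subsingleton.elim _ _
  exact good_noeth h

lemma good_artin' {M : Type*} [AddCommGroup M] {inst : Module ℤ M}
    (h : @IsArtinian ℤ M _ _ inst) : Good M := by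
  obtain rfl : inst = AddCommGroup.toIntModule M := Subsingleton.elim _ _
  exact good_artin h

lemma good_ext {M₁ M M₂ : Type*} [AddCommGroup M₁] [AddCommGroup M] [AddCommGroup M₂]
    (i : M₁ →+ M) (π : M →+ M₂) (hi : Function.Injective i) (hπ : Function.Surjective π)
    (hex : ∀ x, π x = 0 → ∃ y, i y = x) (h₁ : Good M₁) (h₂ : Good M₂) : Good M := by
  refine ⟨fun p hp => ?_, fun p hp => ?_, ?_⟩
  · refine Set.Finite.of_finite_fibers π ((h₂.fin_tors p hp).subset ?_) ?_
    · rintro _ ⟨x, hx, rfl⟩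
      have hx : p • x = 0 := hx
      change p • π x = 0
      rw [← map_nsmul, hx, map_zero]
    · rintro _ ⟨x, hx, rfl⟩
      have hx : p • x = 0 := hx
      refine (((h₁.fin_tors p hp).image i).image (fun z => x + z)).subset ?_
      rintro z ⟨hz, hzx⟩
      have hz : p • z = 0 := hz
      have hzx : π z = π x := hzx
      obtain ⟨y, hy⟩ := hex (z - x) (by rw [map_sub, hzx, sub_self])
      refine ⟨z - x, ⟨y, ?_, hy⟩, by simp⟩
      apply hi
      rw [map_nsmul, hy, smul_sub, hz, hx, map_zero, sub_zero]
  · obtain ⟨S₁, hS₁, h1⟩ := h₁.fin_quot p hp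
    obtain ⟨S₂, hS₂, h2⟩ := h₂.fin_quot p hp
    choose l hl using hπ
    refine ⟨Set.image2 (fun a b => i a + l b) S₁ S₂, hS₁.image2 _ hS₂, fun x => ?_⟩
    obtain ⟨s, hs, y, hy⟩ := h2 (π x)
    obtain ⟨w, hw⟩ := hex (x - l s - p • l y) (by
      rw [map_sub, map_sub, map_nsmul, hl, hl, hy]; abel)
    obtain ⟨t, ht, v, hv⟩ := h1 w
    refine ⟨_, ⟨t, ht, s, hs, rfl⟩, l y + i v, ?_⟩
    have : x = i w + l s + p • l y := by rw [hw]; abel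
    rw [this, hv, map_add, map_nsmul, smul_add]
    simp only [add_assoc, add_left_comm, add_comm]
  · obtain ⟨N₁, hN₁⟩ := h₁.bound
    obtain ⟨N₂, hN₂⟩ := h₂.bound
    refine ⟨max N₁ N₂, fun p hp hN => ?_⟩
    obtain ⟨a1, b1⟩ := hN₁ p hp (le_trans (le_max_left _ _) hN)
    obtain ⟨a2, b2⟩ := hN₂ p hp (le_trans (le_max_right _ _) hN)
    have a2' : ∀ k : ℕ, ∀ x : M₂, p ^ k • x = 0 → x = 0 := by
      intro k
      induction k with
      | zero => intro x hx; simpa using hx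
      | succ k ih => intro x hx; rw [pow_succ, mul_smul] at hx; exact a2 _ (ih _ hx)
    refine ⟨fun x hx => ?_, fun x hx => ?_⟩
    · obtain ⟨y, rfl⟩ := hex x (a2 _ (by rw [← map_nsmul, hx, map_zero]))
      rw [a1 y (hi (by rw [map_nsmul, hx, map_zero])), map_zero]
    · obtain ⟨m, hm, hmx⟩ := b2 (π x) (by
        intro k
        obtain ⟨y, rfl⟩ := hx k
        exact ⟨π y, by rw [map_nsmul]⟩)
      rw [← map_nsmul] at hmx
      obtain ⟨w, hw⟩ := hex _ hmx
      obtain ⟨n, hn, hnw⟩ := b1 w (by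
        intro k
        obtain ⟨y, hy⟩ := hx k
        have : p ^ k • (m • y) = m • x := by rw [smul_comm, hy]
        obtain ⟨v, hv⟩ := hex (m • y) (a2' k _ (by rw [← map_nsmul, this, hmx]))
        exact ⟨v, hi (by rw [map_nsmul, hv, this, hw])⟩)
      refine ⟨n * m, mul_ne_zero hn hm, ?_⟩
      rw [mul_smul, ← hw, ← map_nsmul, hnw, map_zero]

lemma good_equiv {M M' : Type*} [AddCommGroup M] [AddCommGroup M'] (e : M ≃+ M') (h : Good M) :
    Good M' := by
  refine good_ext (M₂ := PUnit.{1}) e.toAddMonoidHom 0 e.injective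
    (fun _ => ⟨0, rfl⟩) (fun x _ => e.surjective x) h ?_
  exact good_noeth (M := PUnit.{1}) inferInstance

lemma good_sub {N : Type*} [AddCommGroup N] {inst : Module ℤ N} (S : Submodule ℤ N)
    {S' : Type*} [AddCommGroup S'] (ι : S' →+ N) (hι : Function.Injective ι)
    (hr : ∀ x ∈ S, ∃ y, ι y = x)
    (h1 : Good S') (h2 : Good (N ⧸ S)) : Good N := by
  refine good_ext ι (AddMonoidHom.mk' (fun x => (Submodule.Quotient.mk x : N ⧸ S))
    (fun _ _ => rfl)) hι ?_ ?_ h1 h2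
  · exact Submodule.Quotient.mk_surjective _
  · intro x hx
    exact hr x ((Submodule.Quotient.mk_eq_zero _).1 hx)

lemma good_minimax {M : Type*} [AddCommGroup M] {inst : Module ℤ M}
    (h : @Module.IsMinimax ℤ M _ _ inst) : Good M := by
  obtain ⟨n, f, hmono, h0, hlast, hfac⟩ := h
  have key : ∀ i : Fin (n + 1), Good (f i) := by
    intro i
    induction i using Fin.induction with
    | zero =>
      rw [h0]
      refine good_noeth' (inst := Submodule.module _) ?_
      infer_instance
    | succ i ih =>
      have hle : f i.castSucc ≤ f i.succ := hmono (Fin.castSucc_le_succ i)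
      let ι : f i.castSucc →+ f i.succ := AddMonoidHom.mk' (fun x => ⟨x, hle x.2⟩) (fun _ _ => rfl)
      refine good_sub _ ι ?_ ?_ ih ((hfac i).elim good_noeth' good_artin')
      · intro x y hxy
        exact Subtype.ext (congrArg (fun z : f i.succ => (z : M)) hxy)
      · intro x hx
        exact ⟨⟨x, hx⟩, rfl⟩
  have := key (Fin.last n)
  rw [hlast] at this
  exact good_equiv (M := (⊤ : Submodule ℤ M))
    ⟨⟨fun x => x, fun x => ⟨x, trivial⟩, fun _ => rfl, fun _ => rfl⟩, fun _ _ => rfl⟩ this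

lemma Good.tors_nat {M : Type*} [AddCommGroup M] (h : Good M) (n : ℕ) (hn : n ≠ 0) :
    {x : M | n • x = 0}.Finite := by
  induction n using Nat.recOnMul with
  | zero => exact absurd rfl hn
  | one => simp
  | prime p hp => exact h.fin_tors p hp
  | mul a b iha ihb =>
    refine Set.Finite.of_finite_fibers (fun x => b • x)
      ((iha (by rintro rfl; simp at hn)).subset ?_) ?_
    · rintro _ ⟨x, hx, rfl⟩
      have hx : (a * b) • x = 0 := hx
      rwa [mul_smul] at hx
    · rintro _ ⟨x, hx, rfl⟩
      refine ((ihb (by rintro rfl; simp at hn)).image (fun z => x + z)).subset ?_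
      rintro z ⟨hz, hzx⟩
      have hzx : b • z = b • x := hzx
      exact ⟨z - x, by simp [smul_sub, hzx], by simp⟩

lemma Good.quot_pow {M : Type*} [AddCommGroup M] (h : Good M) (p : ℕ) (hp : p.Prime) (k : ℕ) :
    ∃ S : Set M, S.Finite ∧ ∀ x, ∃ s ∈ S, ∃ y, x = s + p ^ k • y := by
  induction k with
  | zero => exact ⟨{0}, Set.finite_singleton _, fun x => ⟨0, rfl, x, by simp⟩⟩
  | succ k ih =>
    obtain ⟨S, hS, h1⟩ := ih
    obtain ⟨T, hT, h2⟩ := h.fin_quot p hp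
    refine ⟨Set.image2 (fun a b => a + p ^ k • b) S T, hS.image2 _ hT, fun x => ?_⟩
    obtain ⟨s, hs, y, rfl⟩ := h1 x
    obtain ⟨t, ht, z, rfl⟩ := h2 y
    exact ⟨_, ⟨s, hs, t, ht, rfl⟩, z, by rw [smul_add, pow_succ, mul_smul, add_assoc]⟩

end MMX

namespace MMX
open scoped commutatorElement

section act
variable {G : Type*} [Group G] {A : Type*} [AddCommGroup A] [DistribMulAction G A]

lemma eq_top_of_map (hfi : ∀ H : Subgroup G, H.FiniteIndex → H = ⊤) (H : Subgroup G)
    {X : Type*} (φ : G → X) (S : Set X) (hS : S.Finite) (hφS : ∀ g, φ g ∈ S)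
    (h : ∀ g k, φ g = φ k → g⁻¹ * k ∈ H) : H = ⊤ := by
  apply hfi
  have : Finite S := hS
  let ψ : G ⧸ H → S := fun c => ⟨φ c.out, hφS _⟩
  have hψ : Function.Injective ψ := by
    intro c d hcd
    have := h _ _ (congrArg Subtype.val hcd)
    rw [← QuotientGroup.eq, QuotientGroup.out_eq', QuotientGroup.out_eq'] at this
    exact this
  have : Finite (G ⧸ H) := Finite.of_injective ψ hψ
  exact Subgroup.finiteIndex_of_finite_quotient

/-- stabilizer of `a` modulo an invariant subgroup -/
def stabMod (D : AddSubgroup A) (hD : ∀ (g : G), ∀ a ∈ D, g • a ∈ D) (a : A) : Subgroup G where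
  carrier := {g | g • a - a ∈ D}
  one_mem' := by simp [D.zero_mem]
  mul_mem' := by
    intro g k hg hk
    have : (g * k) • a - a = g • (k • a - a) + (g • a - a) := by
      rw [smul_sub, mul_smul]; abel
    change _ ∈ D
    rw [this]
    exact D.add_mem (hD _ _ hk) hg
  inv_mem' := by
    intro g hg
    have : g⁻¹ • a - a = - (g⁻¹ • (g • a - a)) := by
      rw [smul_sub, inv_smul_smul]; abel
    change _ ∈ D
    rw [this]
    exact D.neg_mem (hD _ _ hg)

lemma stabMod_eq (D : AddSubgroup A) (hD : ∀ (g : G), ∀ a ∈ D, g • a ∈ D)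
    (hfi : ∀ H : Subgroup G, H.FiniteIndex → H = ⊤) (a : A) {X : Type*} (φ : A → X) (S : Set X)
    (hS : S.Finite) (hφS : ∀ g : G, φ (g • a) ∈ S) (h : ∀ x y, φ x = φ y → y - x ∈ D) (g : G) :
    g • a - a ∈ D := by
  have := eq_top_of_map hfi (stabMod D hD a) (fun g => φ (g • a)) S hS hφS (by
    intro g k hgk
    have h1 := hD g⁻¹ _ (h _ _ hgk)
    rw [smul_sub, inv_smul_smul, smul_smul] at h1
    exact h1)
  have hg : g ∈ stabMod D hD a := by rw [this]; trivial
  exact hg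

lemma star (hfi : ∀ H : Subgroup G, H.FiniteIndex → H = ⊤) (C : Submodule ℤ A)
    (hC : ∀ (g : G), ∀ a ∈ C, g • a ∈ C) (hgood : Good (A ⧸ C)) (g h : G) (a : A) :
    h • (g • a - a) - (g • a - a) ∈ C := by
  have step1 : ∀ n : ℕ, n ≠ 0 → ∀ b : A, n • b ∈ C → ∀ k : G, k • b - b ∈ C := by
    intro n hn b hb k
    refine stabMod_eq C.toAddSubgroup hC hfi b C.mkQ _ (hgood.tors_nat n hn) ?_ ?_ k
    · intro g
      change n • C.mkQ (g • b) = 0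
      rw [← map_nsmul, Submodule.mkQ_apply, Submodule.Quotient.mk_eq_zero, ← smul_comm]
      exact hC _ _ hb
    · intro x y hxy
      exact (Submodule.Quotient.eq C).1 hxy.symm
  obtain ⟨N, hN⟩ := hgood.bound
  obtain ⟨p, hNp, hp⟩ := Nat.exists_infinite_primes N
  obtain ⟨-, hb⟩ := hN p hp hNp
  obtain ⟨n, hn, hna⟩ := hb (C.mkQ (g • a - a)) (by
    intro k
    obtain ⟨S, hS, hSx⟩ := hgood.quot_pow p hp k
    choose s hs y hy using hSx
    let D : AddSubgroup A := C.toAddSubgroup ⊔ (nsmulAddMonoidHom (p ^ k) : A →+ A).range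
    have hD : ∀ (g : G), ∀ a ∈ D, g • a ∈ D := by
      intro g a ha
      obtain ⟨c, hc, _, ⟨z, rfl⟩, rfl⟩ := AddSubgroup.mem_sup.1 ha
      rw [smul_add]
      refine AddSubgroup.add_mem_sup (hC g c hc) ⟨g • z, ?_⟩
      simp only [nsmulAddMonoidHom_apply]
      rw [smul_comm]
    have h1 : g • a - a ∈ D := by
      refine stabMod_eq D hD hfi a (fun x => s (C.mkQ x)) S hS (fun g => hs _) ?_ g
      intro u v huv
      have hu := hy (C.mkQ u)
      have hv := hy (C.mkQ v)
      obtain ⟨w, hw⟩ := C.mkQ_surjective (y (C.mkQ v) - y (C.mkQ u))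
      have h2 : C.mkQ (v - u - p ^ k • w) = 0 := by
        rw [map_sub, map_sub, map_nsmul, hw, smul_sub]
        have e : ∀ a b c d t : A ⧸ C, a = t + c → b = t + d → b - a - (d - c) = 0 := by
          rintro _ _ c d t rfl rfl; abel
        exact e _ _ _ _ _ hu (huv ▸ hv)
      rw [Submodule.mkQ_apply, Submodule.Quotient.mk_eq_zero] at h2
      have h3 : v - u = (v - u - p ^ k • w) + p ^ k • w := by abel
      rw [h3]
      exact AddSubgroup.add_mem_sup h2 ⟨w, rfl⟩
    obtain ⟨c, hc, _, ⟨z, rfl⟩, hcz⟩ := AddSubgroup.mem_sup.1 h1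
    refine ⟨C.mkQ z, ?_⟩
    have hc0 : C.mkQ c = 0 := (Submodule.Quotient.mk_eq_zero C).2 hc
    rw [← hcz, map_add, hc0, zero_add, nsmulAddMonoidHom_apply, map_nsmul])
  rw [← map_nsmul, Submodule.mkQ_apply, Submodule.Quotient.mk_eq_zero] at hna
  exact step1 n hn _ hna h

lemma comm_star (C : Submodule ℤ A)
    (hC : ∀ (g : G), ∀ a ∈ C, g • a ∈ C)
    (hst : ∀ (g h : G) (a : A), h • (g • a - a) - (g • a - a) ∈ C)
    (k : G) (hk : k ∈ commutator G) (a : A) : k • a - a ∈ C := by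
  have key : commutator G ≤ ⨅ a : A, stabMod (G := G) C.toAddSubgroup hC a := by
    rw [commutator_def, Subgroup.commutator_le]
    intro g _ h _
    rw [Subgroup.mem_iInf]
    intro a
    change ⁅g, h⁆ • a - a ∈ C
    obtain ⟨b, rfl⟩ : ∃ b, (h * g) • b = a := ⟨(h * g)⁻¹ • a, smul_inv_smul _ _⟩
    have e1 : ⁅g, h⁆ • (h * g) • b = g • h • b := by
      rw [smul_smul, smul_smul]; congr 1; rw [commutatorElement_def]; group
    have : ⁅g, h⁆ • (h * g) • b - (h * g) • b =
        (g • (h • b - b) - (h • b - b)) - (h • (g • b - b) - (g • b - b)) := by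
      rw [e1, mul_smul]; simp only [smul_sub]; abel
    rw [this]
    exact C.sub_mem (hst _ _ _) (hst _ _ _)
  exact Subgroup.mem_iInf.1 (key hk) a

end act

section grp
variable {G : Type*} [Group G]

lemma zpowers_of_fg (hind : ∀ H K : Subgroup G, H ⊔ K = ⊤ → H = ⊤ ∨ K = ⊤) [Nontrivial G]
    (S : Set G) (hS : S.Finite) (h : Subgroup.closure S = ⊤) : ∃ s : G, Subgroup.zpowers s = ⊤ := by
  induction S, hS using Set.Finite.induction_on with
  | empty => rw [Subgroup.closure_empty] at h; exact absurd h bot_ne_top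
  | @insert a S _ _ ih =>
    rw [Set.insert_eq, Subgroup.closure_union, ← Subgroup.zpowers_eq_closure] at h
    rcases hind _ _ h with h | h
    · exact ⟨a, h⟩
    · exact ih h

lemma not_cyclic [Infinite G] (hind : ∀ H K : Subgroup G, H ⊔ K = ⊤ → H = ⊤ ∨ K = ⊤) (s : G) :
    Subgroup.zpowers s ≠ ⊤ := by
  intro h
  have hord : orderOf s = 0 := Infinite.orderOf_eq_zero_of_forall_mem_zpowers
    (fun x => by rw [h]; trivial)
  have hinj : Function.Injective (fun n : ℤ => s ^ n) :=
    injective_zpow_iff_not_isOfFinOrder.2 (orderOf_eq_zero_iff.1 hord)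
  have aux : ∀ n : ℤ, ¬ IsUnit n → Subgroup.zpowers (s ^ n) ≠ ⊤ := by
    intro n hn h
    have : s ∈ Subgroup.zpowers (s ^ n) := by rw [h]; trivial
    obtain ⟨k, hk⟩ := this
    have hk : s ^ (n * k) = s ^ (1 : ℤ) := by rw [zpow_mul, zpow_one]; exact hk
    exact hn (IsUnit.of_mul_eq_one _ (hinj hk))
  rcases hind (Subgroup.zpowers (s ^ (2 : ℤ))) (Subgroup.zpowers (s ^ (3 : ℤ))) (by
    rw [eq_top_iff, ← h, Subgroup.zpowers_le]
    have h5 : (s ^ (2 : ℤ))⁻¹ * s ^ (3 : ℤ) ∈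
        Subgroup.zpowers (s ^ (2 : ℤ)) ⊔ Subgroup.zpowers (s ^ (3 : ℤ)) :=
      Subgroup.mul_mem _
        (Subgroup.mem_sup_left (Subgroup.inv_mem _ (Subgroup.mem_zpowers (s ^ (2 : ℤ)))))
        (Subgroup.mem_sup_right (Subgroup.mem_zpowers (s ^ (3 : ℤ))))
    have h6 : (s ^ (2 : ℤ))⁻¹ * s ^ (3 : ℤ) = s := by group
    rw [h6] at h5
    exact h5) with h | h
  · exact aux 2 (by decide) h
  · exact aux 3 (by decide) h

lemma noFI [Infinite G] (hind : ∀ H K : Subgroup G, H ⊔ K = ⊤ → H = ⊤ ∨ K = ⊤)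
    (H : Subgroup G) (hH : H.FiniteIndex) : H = ⊤ := by
  have : Finite (G ⧸ H) := Subgroup.finite_quotient_of_finiteIndex
  let S : Set G := Set.range (Quotient.out : G ⧸ H → G)
  rcases hind H (Subgroup.closure S) (by
    rw [eq_top_iff]
    intro g _
    have h1 : ((g : G ⧸ H).out)⁻¹ * g ∈ H := by
      rw [← QuotientGroup.eq, QuotientGroup.out_eq']
    have : g = (g : G ⧸ H).out * (((g : G ⧸ H).out)⁻¹ * g) := by group
    rw [this]
    exact Subgroup.mul_mem _ (Subgroup.mem_sup_right (Subgroup.subset_closure ⟨_, rfl⟩))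
      (Subgroup.mem_sup_left h1)) with h | h
  · exact h
  · obtain ⟨s, hs⟩ := zpowers_of_fg hind S (Set.finite_range _) h
    exact absurd hs (not_cyclic hind s)

lemma comm_of_central (hc : ∀ k ∈ commutator G, ∀ g : G, k * g = g * k)
    (htor : ∀ g : G, ∃ n : ℕ, n ≠ 0 ∧ g ^ n ∈ commutator G)
    (hdiv : ∀ n : ℕ, n ≠ 0 → ∀ g : G, ∃ h, (h ^ n)⁻¹ * g ∈ commutator G) (a b : G) :
    a * b = b * a := by
  have hcm : ∀ x y : G, ⁅x, y⁆ ∈ commutator G := fun x y => by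
    rw [commutator_def]; exact Subgroup.commutator_mem_commutator (Subgroup.mem_top _) (Subgroup.mem_top _)
  have hcr : ∀ x y z : G, ⁅x, y * z⁆ = ⁅x, y⁆ * ⁅x, z⁆ := by
    intro x y z
    have e : ⁅x, y * z⁆ = ⁅x, y⁆ * (y * ⁅x, z⁆ * y⁻¹) := by
      simp only [commutatorElement_def]; group
    rw [e, ← hc _ (hcm x z) y]; group
  have hcl : ∀ x y z : G, ⁅x * y, z⁆ = ⁅x, z⁆ * ⁅y, z⁆ := by
    intro x y z
    have e : ⁅x * y, z⁆ = (x * ⁅y, z⁆ * x⁻¹) * ⁅x, z⁆ := by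
      simp only [commutatorElement_def]; group
    rw [e, ← hc _ (hcm y z) x, hc _ (hcm x z)]; group
  have hpr : ∀ (n : ℕ) (x y : G), ⁅x, y ^ n⁆ = ⁅x, y⁆ ^ n := by
    intro n x y
    induction n with
    | zero => simp
    | succ n ih => rw [pow_succ, hcr, ih, pow_succ]
  have hpl : ∀ (n : ℕ) (x y : G), ⁅x ^ n, y⁆ = ⁅x, y⁆ ^ n := by
    intro n x y
    induction n with
    | zero => simp
    | succ n ih => rw [pow_succ, hcl, ih, pow_succ]
  obtain ⟨n, hn, han⟩ := htor a
  obtain ⟨h, hh⟩ := hdiv n hn b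
  rw [← commutatorElement_eq_one_iff_mul_comm]
  have e : b = h ^ n * ((h ^ n)⁻¹ * b) := by group
  rw [e, hcr, hpr, ← hpl, commutatorElement_eq_one_iff_mul_comm.2 (hc _ han h),
    commutatorElement_eq_one_iff_mul_comm.2 (hc _ hh a).symm, one_mul]

/-- nilpotent of class at most three with divisible torsion abelianization is abelian -/
lemma comm_bot (h3 : ∀ k ∈ commutator G, ∀ g h : G, ⁅⁅k, g⁆, h⁆ = 1)
    (htor : ∀ g : G, ∃ n : ℕ, n ≠ 0 ∧ g ^ n ∈ commutator G)
    (hdiv : ∀ n : ℕ, n ≠ 0 → ∀ g : G, ∃ h, (h ^ n)⁻¹ * g ∈ commutator G) :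
    commutator G = ⊥ := by
  let N : Subgroup G := ⁅commutator G, (⊤ : Subgroup G)⁆
  have hN : N.Normal := inferInstance
  let q := QuotientGroup.mk' N
  have hq : Function.Surjective q := QuotientGroup.mk'_surjective N
  have hmap : (commutator G).map q = commutator (G ⧸ N) := by
    rw [commutator_def, Subgroup.map_commutator, Subgroup.map_top_of_surjective _ hq,
      ← commutator_def]
  have hcomm : ∀ a b : G ⧸ N, a * b = b * a := by
    apply comm_of_central
    · intro k hk g
      rw [← hmap] at hk
      obtain ⟨k, hk, rfl⟩ := hk
      obtain ⟨g, rfl⟩ := hq g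
      rw [← commutatorElement_eq_one_iff_mul_comm, ← map_commutatorElement]
      exact (QuotientGroup.eq_one_iff _).2 (Subgroup.commutator_mem_commutator hk trivial)
    · intro g
      obtain ⟨g, rfl⟩ := hq g
      obtain ⟨n, hn, h⟩ := htor g
      exact ⟨n, hn, by rw [← hmap]; exact ⟨_, h, map_pow _ _ _⟩⟩
    · intro n hn g
      obtain ⟨g, rfl⟩ := hq g
      obtain ⟨h, hh⟩ := hdiv n hn g
      exact ⟨q h, by rw [← hmap]; exact ⟨_, hh, by simp⟩⟩
  have hle : commutator G ≤ N := by
    rw [commutator_def, Subgroup.commutator_le]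
    intro g _ h _
    rw [← QuotientGroup.eq_one_iff (N := N)]
    change q ⁅g, h⁆ = 1
    rw [map_commutatorElement, commutatorElement_eq_one_iff_mul_comm]
    exact hcomm _ _
  have hNc : N ≤ Subgroup.center G := by
    rw [Subgroup.commutator_le]
    intro k hk g _
    rw [Subgroup.mem_center_iff]
    intro h
    exact (commutatorElement_eq_one_iff_mul_comm.1 (h3 k hk g h)).symm
  have hNb : N = ⊥ := by
    rw [eq_bot_iff, Subgroup.commutator_le]
    intro k hk g _
    rw [Subgroup.mem_bot, commutatorElement_eq_one_iff_mul_comm]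
    exact (Subgroup.mem_center_iff.1 (hNc (hle hk)) g).symm
  rw [eq_bot_iff, ← hNb]
  exact hle

end grp

section mm
variable {R : Type*} [Ring R]

def NA (R M : Type*) [Ring R] [AddCommGroup M] [Module R M] : Prop :=
  IsNoetherian R M ∨ IsArtinian R M

def Stp {M : Type*} [AddCommGroup M] [Module R M] (Y Z : Submodule R M) : Prop :=
  Y ≤ Z ∧ NA R (↥Z ⧸ Submodule.comap Z.subtype Y)

lemma na_inj {Z₁ Z₂ : Type*} [AddCommGroup Z₁] [Module R Z₁] [AddCommGroup Z₂] [Module R Z₂]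
    (Y₁ : Submodule R Z₁) (Y₂ : Submodule R Z₂) (ψ : Z₁ →ₗ[R] Z₂)
    (h : ∀ z, ψ z ∈ Y₂ ↔ z ∈ Y₁) (h2 : NA R (Z₂ ⧸ Y₂)) : NA R (Z₁ ⧸ Y₁) := by
  have hinj : Function.Injective (Y₁.mapQ Y₂ ψ (fun z hz => (h z).2 hz)) := by
    rw [injective_iff_map_eq_zero]
    intro x hx
    obtain ⟨x, rfl⟩ := Y₁.mkQ_surjective x
    rw [Submodule.mkQ_apply, Submodule.mapQ_apply, Submodule.Quotient.mk_eq_zero] at hx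
    exact (Submodule.Quotient.mk_eq_zero _).2 ((h x).1 hx)
  rcases h2 with h2 | h2
  · exact .inl (isNoetherian_of_injective _ hinj)
  · exact .inr (isArtinian_of_injective _ hinj)

lemma na_surj {Z₁ Z₂ : Type*} [AddCommGroup Z₁] [Module R Z₁] [AddCommGroup Z₂] [Module R Z₂]
    (Y₁ : Submodule R Z₁) (Y₂ : Submodule R Z₂) (ψ : Z₁ →ₗ[R] Z₂) (hs : Function.Surjective ψ)
    (h : ∀ z ∈ Y₁, ψ z ∈ Y₂) (h1 : NA R (Z₁ ⧸ Y₁)) : NA R (Z₂ ⧸ Y₂) := by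
  have hsurj : Function.Surjective (Y₁.mapQ Y₂ ψ h) := by
    intro x
    obtain ⟨x, rfl⟩ := Y₂.mkQ_surjective x
    obtain ⟨z, rfl⟩ := hs x
    exact ⟨Y₁.mkQ z, rfl⟩
  rcases h1 with h1 | h1
  · exact .inl (isNoetherian_of_surjective _ (LinearMap.range_eq_top.2 hsurj))
  · exact .inr (isArtinian_of_surjective _ _ hsurj)

lemma Stp.comap {M M' : Type*} [AddCommGroup M] [Module R M] [AddCommGroup M'] [Module R M']
    (φ : M →ₗ[R] M') {Y Z : Submodule R M'} (h : Stp Y Z) : Stp (Y.comap φ) (Z.comap φ) := by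
  refine ⟨Submodule.comap_mono h.1, na_inj _ _
    ((φ.comp (Z.comap φ).subtype).codRestrict Z (fun z => z.2)) (fun z => Iff.rfl) h.2⟩

lemma Stp.inf {M : Type*} [AddCommGroup M] [Module R M]
    (C : Submodule R M) {Y Z : Submodule R M} (h : Stp Y Z) : Stp (C ⊓ Y) (C ⊓ Z) := by
  refine ⟨inf_le_inf_left _ h.1, na_inj _ _
    (Submodule.inclusion (inf_le_right : C ⊓ Z ≤ Z)) (fun z => ?_) h.2⟩
  exact ⟨fun hz => ⟨z.2.1, hz⟩, fun hz => hz.2⟩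

lemma Stp.map {M M' : Type*} [AddCommGroup M] [Module R M] [AddCommGroup M'] [Module R M']
    (φ : M →ₗ[R] M') {Y Z : Submodule R M} (h : Stp Y Z) : Stp (Y.map φ) (Z.map φ) := by
  refine ⟨Submodule.map_mono h.1, na_surj _ _
    ((φ.comp Z.subtype).codRestrict (Z.map φ) (fun z => ⟨z, z.2, rfl⟩)) ?_ ?_ h.2⟩
  · rintro ⟨_, z, hz, rfl⟩
    exact ⟨⟨z, hz⟩, rfl⟩
  · intro z hz
    exact ⟨z, hz, rfl⟩

lemma minimax_iff {M : Type*} [AddCommGroup M] [Module R M] :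
    Module.IsMinimax R M ↔ Relation.ReflTransGen Stp (⊥ : Submodule R M) ⊤ := by
  constructor
  · rintro ⟨n, f, hmono, h0, hlast, hfac⟩
    have key : ∀ i : Fin (n + 1), Relation.ReflTransGen Stp (⊥ : Submodule R M) (f i) := by
      intro i
      induction i using Fin.induction with
      | zero => rw [h0]
      | succ i ih => exact ih.tail ⟨hmono (Fin.castSucc_le_succ i), hfac i⟩
    rw [← hlast]
    exact key _
  · intro h
    have key : ∀ Y : Submodule R M, Relation.ReflTransGen Stp (⊥ : Submodule R M) Y →
        ∃ (n : ℕ) (f : ℕ → Submodule R M), f 0 = ⊥ ∧ f n = Y ∧ ∀ i < n, Stp (f i) (f (i + 1)) := by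
      intro Y hY
      induction hY with
      | refl => exact ⟨0, fun _ => ⊥, rfl, rfl, fun i hi => absurd hi (Nat.not_lt_zero _)⟩
      | @tail Y Z _ hYZ ih =>
        obtain ⟨n, f, h0, hn, hs⟩ := ih
        refine ⟨n + 1, fun i => if i ≤ n then f i else Z, by simpa using h0, by simp, ?_⟩
        intro i hi
        rcases Nat.lt_succ_iff_lt_or_eq.1 hi with h | h
        · simp only [if_pos h.le, if_pos (Nat.succ_le_of_lt h)]
          exact hs i h
        · subst h
          simp only [le_refl, if_true]
          rw [if_neg (by omega), hn]
          exact hYZ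
    obtain ⟨n, f, h0, hn, hs⟩ := key _ h
    refine ⟨n, fun i => f i, ?_, h0, hn, fun i => (hs i i.2).2⟩
    rw [Fin.monotone_iff_le_succ]
    intro i
    exact (hs i i.2).1

lemma minimax_inf {A : Type*} [AddCommGroup A] [Module R A] (C D : Submodule R A)
    (hC : Module.IsMinimax R (A ⧸ C)) (hD : Module.IsMinimax R (A ⧸ D)) :
    Module.IsMinimax R (A ⧸ (C ⊓ D)) := by
  rw [minimax_iff] at *
  have h1 := Relation.ReflTransGen.lift (p := Stp) (r := Stp) (Submodule.comap C.mkQ)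
    (fun _ _ h => Stp.comap C.mkQ h) _ _ hC
  have h2 := Relation.ReflTransGen.lift (p := Stp) (r := Stp)
    (fun X => C ⊓ Submodule.comap D.mkQ X)
    (fun _ _ h => Stp.inf C (Stp.comap D.mkQ h)) _ _ hD
  simp only [Function.onFun, Submodule.comap_bot, Submodule.comap_top, Submodule.ker_mkQ,
    inf_top_eq] at h1 h2
  have h3 := Relation.ReflTransGen.lift (p := Stp) (r := Stp) (Submodule.map (C ⊓ D).mkQ)
    (fun _ _ h => Stp.map (C ⊓ D).mkQ h) _ _ (h2.trans h1)
  simp only [Function.onFun] at h3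
  rw [Submodule.mkQ_map_self, Submodule.map_top, Submodule.range_mkQ] at h3
  exact h3

end mm
end MMX

namespace MMX
open scoped commutatorElement

lemma comm3 {G : Type*} [Group G] {A : Type*} [AddCommGroup A] [DistribMulAction G A]
    (hfaith : ∀ g : G, (∀ a : A, g • a = a) → g = 1) (K : Subgroup G) [hK : K.Normal]
    (h1 : ∀ (g : G), ∀ k ∈ K, ∀ a : A, g • (k • a - a) = k • a - a)
    (h2 : ∀ (g h : G) (a : A), ∀ k ∈ K,
      k • (h • (g • a - a) - (g • a - a)) = h • (g • a - a) - (g • a - a))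
    (k : G) (hk : k ∈ K) (g h : G) : ⁅⁅k, g⁆, h⁆ = 1 := by
  have key : ∀ k ∈ K, ∀ (g : G) (a : A),
      ⁅k, g⁆ • a - a = k • (a - g⁻¹ • a) - (a - g⁻¹ • a) := by
    intro k hk g a
    have e0 : ∀ x : A, k⁻¹ • x = x - (k • x - x) := by
      intro x
      rw [inv_smul_eq_iff, smul_sub, h1 k k hk]; abel
    have e1 : ⁅k, g⁆ • a = k • g • k⁻¹ • g⁻¹ • a := by
      rw [commutatorElement_def]; simp only [mul_smul]
    rw [e1, e0, smul_sub g, h1 g k hk, smul_inv_smul, smul_sub k, h1 k k hk, smul_sub k]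
    abel
  have hc : ⁅k, g⁆ ∈ K := by
    rw [commutatorElement_def, mul_assoc, mul_assoc]
    refine K.mul_mem hk ?_
    rw [← mul_assoc]
    exact hK.conj_mem _ (K.inv_mem hk) g
  apply hfaith
  intro a
  rw [← sub_eq_zero, key _ hc, key k hk]
  have := h2 h⁻¹ g⁻¹ a k hk
  have e : (a - h⁻¹ • a) - g⁻¹ • (a - h⁻¹ • a)
      = g⁻¹ • (h⁻¹ • a - a) - (h⁻¹ • a - a) := by
    simp only [smul_sub]; abel
  rw [e, this, sub_self]

lemma final {G : Type*} [Group G] (hG' : commutator G ≠ ⊤)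
    (hind : ∀ H K : Subgroup G, H ⊔ K = ⊤ → H = ⊤ ∨ K = ⊤)
    (hfi : ∀ H : Subgroup G, H.FiniteIndex → H = ⊤)
    (h3 : ∀ k ∈ commutator G, ∀ g h : G, ⁅⁅k, g⁆, h⁆ = 1) :
    ∃ (q : ℕ) (hq : q.Prime), Nonempty (G ≃* Multiplicative (PruferGroup q hq)) := by
  let B := Additive (Abelianization G)
  let f : G →* Abelianization G := Abelianization.of
  have hf : Function.Surjective f := QuotientGroup.mk'_surjective _
  have hker : ∀ g, f g = 1 ↔ g ∈ commutator G := fun g => QuotientGroup.eq_one_iff g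
  have hfi' : ∀ H : AddSubgroup B, H.FiniteIndex → H = ⊤ := by
    intro H hH
    let H' : Subgroup (Abelianization G) := AddSubgroup.toSubgroup' H
    have hH' : H'.FiniteIndex := ⟨hH.index_ne_zero⟩
    have : H'.comap f = ⊤ := hfi _ ⟨by rw [Subgroup.index_comap_of_surjective _ hf]; exact hH'.index_ne_zero⟩
    rw [eq_top_iff]
    intro x _
    obtain ⟨g, hg⟩ := hf x.toMul
    have hg2 : g ∈ H'.comap f := by rw [this]; trivial
    have hg3 : f g ∈ H' := hg2
    rw [hg] at hg3
    exact hg3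
  have hi : AInd B := by
    intro H K hHK
    let H' : Subgroup (Abelianization G) := AddSubgroup.toSubgroup' H
    let K' : Subgroup (Abelianization G) := AddSubgroup.toSubgroup' K
    have hl : ∀ L : AddSubgroup B, (AddSubgroup.toSubgroup' L).comap f = ⊤ → L = ⊤ := by
      intro L hL
      rw [eq_top_iff]
      intro x _
      obtain ⟨g, hg⟩ := hf x.toMul
      have hg2 : g ∈ (AddSubgroup.toSubgroup' L).comap f := by rw [hL]; trivial
      have hg3 : f g ∈ (AddSubgroup.toSubgroup' L) := hg2
      rw [hg] at hg3
      exact hg3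
    have := hind (H'.comap f) (K'.comap f) (by
      rw [eq_top_iff]
      intro g _
      have hg : Additive.ofMul (f g) ∈ H ⊔ K := by rw [hHK]; trivial
      obtain ⟨x, hx, y, hy, hxy⟩ := AddSubgroup.mem_sup.1 hg
      obtain ⟨u, hu⟩ := hf x.toMul
      have hu1 : u ∈ H'.comap f := by
        change f u ∈ H'
        rw [hu]; exact hx
      have hv1 : u⁻¹ * g ∈ K'.comap f := by
        change f (u⁻¹ * g) ∈ K'
        rw [map_mul, map_inv, hu]
        have : f g = x.toMul * y.toMul := congrArg Additive.toMul hxy.symm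
        rw [this, inv_mul_cancel_left]
        exact hy
      have e : g = u * (u⁻¹ * g) := by group
      rw [e]
      exact Subgroup.mul_mem _ (Subgroup.mem_sup_left hu1) (Subgroup.mem_sup_right hv1))
    exact this.imp (hl H) (hl K)
  have hd : Dvb B := dvb_of_noFI hfi'
  have hnt : Nontrivial B := by
    obtain ⟨g, hg⟩ : ∃ g, g ∉ commutator G := by
      by_contra! h
      exact hG' (eq_top_iff.2 fun g _ => h g)
    exact ⟨⟨Additive.ofMul (f g), 0, fun h => hg ((hker g).1 h)⟩⟩
  obtain ⟨q, hq, ⟨e⟩⟩ := classify hd hi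
  have hbot := comm_bot h3
    (by
      intro g
      have : Fact q.Prime := ⟨hq⟩
      obtain ⟨x, hx⟩ := e.surjective (Additive.ofMul (f g))
      obtain ⟨k, hk⟩ := (mem_prim (p := q) x.1).1 x.2
      refine ⟨q ^ k, pow_ne_zero _ hq.ne_zero, ?_⟩
      rw [← hker, map_pow]
      have hk' : q ^ k • x = 0 := Subtype.ext hk
      have h2 : q ^ k • (Additive.ofMul (f g) : B) = 0 := by
        rw [← hx, ← map_nsmul, hk', map_zero]
      exact h2)
    (by
      intro n hn g
      obtain ⟨y, hy⟩ := hd.nat n hn (Additive.ofMul (f g))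
      obtain ⟨h, hh⟩ := hf y.toMul
      refine ⟨h, ?_⟩
      rw [← hker, map_mul, map_inv, map_pow, hh, inv_mul_eq_one]
      exact hy)
  have hinj : Function.Injective f := by
    rw [injective_iff_map_eq_one]
    intro g hg
    have := (hker g).1 hg
    rw [hbot] at this
    exact Subgroup.mem_bot.1 this
  let E : G ≃* Abelianization G := MulEquiv.ofBijective f ⟨hinj, hf⟩
  exact ⟨q, hq, ⟨E.trans (AddEquiv.toMultiplicativeRight e.symm)⟩⟩

end MMX


/-- Theorem 2.2: let `A` be a `ℤG`-module where `G` is an infinite locally soluble group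
with `G ≠ G'` acting faithfully (`C_G(A) = 1`). If `A/C_A(G)` is not a minimax `ℤ`-module
and `A/C_A(H)` is a minimax `ℤ`-module for every proper subgroup `H` of `G`, then `G` is
isomorphic to a quasi-cyclic `q`-group for some prime `q`. -/
theorem minimax_int_proper_subgroups_prufer (G : Type*) [Group G] [Infinite G]
    (A : Type*) [AddCommGroup A] [DistribMulAction G A]
    (hsol : ∀ H : Subgroup G, H.FG → IsSolvable H)
    (hG' : commutator G ≠ ⊤)
    (hfaith : ∀ g : G, (∀ a : A, g • a = a) → g = 1)
    (hG : ¬ Module.IsMinimax ℤ (A ⧸ moduleCentralizer ℤ A (⊤ : Subgroup G)))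
    (hH : ∀ H : Subgroup G, H ≠ ⊤ → Module.IsMinimax ℤ (A ⧸ moduleCentralizer ℤ A H)) :
    ∃ (q : ℕ) (hq : q.Prime), Nonempty (G ≃* Multiplicative (PruferGroup q hq)) := by
  have hind : ∀ H K : Subgroup G, H ⊔ K = ⊤ → H = ⊤ ∨ K = ⊤ := by
    intro H K hHK
    by_contra! hne
    have h := MMX.minimax_inf _ _ (hH H hne.1) (hH K hne.2)
    have e : moduleCentralizer ℤ A H ⊓ moduleCentralizer ℤ A K
        = moduleCentralizer ℤ A (⊤ : Subgroup G) := by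
      apply le_antisymm
      · rintro a ⟨h1, h2⟩ g -
        have hle : H ⊔ K ≤ MulAction.stabilizer G a :=
          sup_le (fun g hg => h1 g hg) (fun g hg => h2 g hg)
        rw [hHK] at hle
        exact hle (Subgroup.mem_top g)
      · intro a ha
        exact ⟨fun g _ => ha g trivial, fun g _ => ha g trivial⟩
    rw [e] at h
    exact hG h
  have hfi := MMX.noFI hind
  have hinv : ∀ H : Subgroup G, commutator G ≤ H → ∀ (g : G),
      ∀ a ∈ moduleCentralizer ℤ A H, g • a ∈ moduleCentralizer ℤ A H := by
    intro H hle g a ha k hk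
    have hn : H.Normal := Subgroup.Normal.of_commutator_le _ hle
    have h1 : (g⁻¹ * k * g) • a = a := ha _ (by simpa using hn.conj_mem k hk g⁻¹)
    rw [mul_smul, mul_smul, inv_smul_eq_iff] at h1
    exact h1
  have hst : ∀ H : Subgroup G, commutator G ≤ H → H ≠ ⊤ → ∀ (g h : G) (a : A),
      h • (g • a - a) - (g • a - a) ∈ moduleCentralizer ℤ A H := fun H hle hne =>
    MMX.star hfi _ (hinv H hle) (MMX.good_minimax (hH H hne))
  refine MMX.final hG' hind hfi (MMX.comm3 (A := A) hfaith (commutator G) ?_ ?_)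
  · intro g k hk a
    have hne : Subgroup.zpowers g ⊔ commutator G ≠ ⊤ := fun h =>
      (hind _ _ h).elim (MMX.not_cyclic hind g) hG'
    exact MMX.comm_star _ (hinv _ le_sup_right) (hst _ le_sup_right hne) k hk a g
      (Subgroup.mem_sup_left (Subgroup.mem_zpowers g))
  · intro g h a k hk
    exact hst _ le_rfl hG' g h a k hk
end

section
/- Let R be an associative ring, G an infinite group with G ≠ G' (G is not equal to its derived subgroup), and A an RG-module with C_G(A) = 1. If A/C_A(G) is an infinite R-module and A/C_A(H) is a finite R-module for every proper subgroup H of G, then G is isomorphic to a quasi-cyclic q-group C_{q^∞} for some prime q. -/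
theorem aux_primary {B T : Type*} [AddCommGroup B] [AddCommGroup T] (f : B →+ T)
    (hJ : ∀ H K : AddSubgroup B, H ≠ ⊤ → K ≠ ⊤ → H ⊔ K ≠ ⊤)
    (hf : ∀ y, ∃ n : ℕ, 0 < n ∧ n • f y = 0) (p : ℕ) (hp : p.Prime) :
    (∀ y, ∃ k : ℕ, p ^ k • f y = 0) ∨ (∀ y, ∃ n : ℕ, n.Coprime p ∧ n • f y = 0) := by
  let H1 : AddSubgroup B :=
    { carrier := {y | ∃ k : ℕ, p ^ k • f y = 0}
      zero_mem' := ⟨0, by simp⟩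
      add_mem' := by
        rintro a b ⟨k, hk⟩ ⟨l, hl⟩
        refine ⟨k + l, ?_⟩
        rw [map_add, smul_add, pow_add, mul_smul, mul_comm, ← mul_comm, smul_comm, hk, mul_smul, hl]
        simp
      neg_mem' := by
        rintro a ⟨k, hk⟩
        exact ⟨k, by simp [hk]⟩ }
  let H2 : AddSubgroup B :=
    { carrier := {y | ∃ n : ℕ, n.Coprime p ∧ n • f y = 0}
      zero_mem' := ⟨1, by simp⟩
      add_mem' := by
        rintro a b ⟨k, hk', hk⟩ ⟨l, hl', hl⟩
        refine ⟨k * l, Nat.Coprime.mul_left hk' hl', ?_⟩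
        rw [map_add, smul_add, mul_smul, smul_comm, hk, mul_smul, hl]
        simp
      neg_mem' := by
        rintro a ⟨k, hk', hk⟩
        exact ⟨k, hk', by simp [hk]⟩ }
  have hsup : H1 ⊔ H2 = ⊤ := by
    rw [eq_top_iff]
    intro y _
    obtain ⟨n, hn, hny⟩ := hf y
    obtain ⟨k, m, hm, rfl⟩ := Nat.exists_eq_pow_mul_and_not_dvd hn.ne' p hp.ne_one
    have hmp : m.Coprime p := ((Nat.Prime.coprime_iff_not_dvd hp).2 hm).symm
    have hco : IsCoprime ((p ^ k : ℕ) : ℤ) (m : ℤ) :=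
      Nat.isCoprime_iff_coprime.2 (Nat.Coprime.pow_left k hmp.symm)
    obtain ⟨u, v, huv⟩ := hco
    have hy : y = (v * m) • y + (u * (p ^ k : ℕ)) • y := by
      rw [← add_smul, add_comm, huv, one_smul]
    rw [hy]
    refine AddSubgroup.add_mem_sup ?_ ?_
    · refine ⟨k, ?_⟩
      rw [map_zsmul, mul_smul, smul_comm, natCast_zsmul, smul_comm (p ^ k) m,
        ← mul_smul, mul_comm, hny, smul_zero]
    · refine ⟨m, hmp, ?_⟩
      rw [map_zsmul, mul_smul, smul_comm, natCast_zsmul, smul_comm m (p ^ k), ← mul_smul,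
        hny, smul_zero]
  by_cases h1 : H1 = ⊤
  · left
    intro y
    have : y ∈ H1 := h1 ▸ AddSubgroup.mem_top y
    exact this
  · by_cases h2 : H2 = ⊤
    · right
      intro y
      have : y ∈ H2 := h2 ▸ AddSubgroup.mem_top y
      exact this
    · exact absurd hsup (hJ _ _ h1 h2)

theorem aux_circle {w z : AddCircle (1 : ℚ)} {n : ℕ} (hn : 0 < n) (hw : addOrderOf w = n)
    (hz : n • z = 0) : z ∈ AddSubgroup.zmultiples w := by
  have key : ∀ u : AddCircle (1 : ℚ), n • u = 0 →
      u ∈ AddSubgroup.zmultiples (((1 / n : ℚ)) : AddCircle (1 : ℚ)) := by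
    intro u hu
    induction u using QuotientAddGroup.induction_on with
    | H r =>
    have hu' : ((n • r : ℚ) : AddCircle (1 : ℚ)) = 0 := hu
    rw [AddCircle.coe_eq_zero_iff] at hu'
    obtain ⟨a, ha⟩ := hu'
    refine ⟨a, ?_⟩
    have : r = a • (1 / n : ℚ) := by
      have h0 : (n : ℚ) ≠ 0 := by positivity
      simp at ha ⊢
      field_simp
      linarith
    rw [this]
    rfl
  have he := AddCircle.addOrderOf_period_div (p := (1 : ℚ)) hn
  have hle : AddSubgroup.zmultiples w ≤
      AddSubgroup.zmultiples (((1 / n : ℚ)) : AddCircle (1 : ℚ)) := by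
    rw [AddSubgroup.zmultiples_le]
    exact key w (hw ▸ addOrderOf_nsmul_eq_zero w)
  have hfin : Finite (AddSubgroup.zmultiples (((1 / n : ℚ)) : AddCircle (1 : ℚ))) := by
    apply Nat.finite_of_card_ne_zero
    rw [Nat.card_zmultiples, he]; exact hn.ne'
  have := AddSubgroup.eq_of_le_of_card_ge hle (by
    rw [Nat.card_zmultiples, Nat.card_zmultiples, he, hw])
  rw [this]
  exact key z hz

theorem aux_torsion {B : Type*} [AddCommGroup B]
    (hJ : ∀ H K : AddSubgroup B, H ≠ ⊤ → K ≠ ⊤ → H ⊔ K ≠ ⊤) (x : B) :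
    ∃ n : ℕ, 0 < n ∧ n • x = 0 := by
  by_contra hx
  push Not at hx
  have hinj : Function.Injective (LinearMap.toSpanSingleton ℤ B x) := by
    rw [injective_iff_map_eq_zero]
    intro a ha
    rw [LinearMap.toSpanSingleton_apply] at ha
    by_contra h0
    refine hx a.natAbs (Int.natAbs_pos.2 h0) ?_
    rcases Int.natAbs_eq a with h | h <;> rw [h] at ha <;> simpa using ha
  obtain ⟨c, hc⟩ := CharacterModule.dual_surjective_of_injective _ hinj
    (CharacterModule.int.divByNat 6)
  have hcx : addOrderOf (c x) = 6 := by
    have h1 : c x = (((1 : ℚ) / (6 : ℕ) : ℚ) : AddCircle (1 : ℚ)) := by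
      have := congrArg (fun d : CharacterModule ℤ => d 1) hc
      have h2 : c ((1 : ℤ) • x) = (1 : ℤ) • (((((6 : ℕ) : ℚ)⁻¹ : ℚ)) : AddCircle (1 : ℚ)) := this
      rw [one_smul, one_smul] at h2
      rw [h2, one_div]
    rw [h1]
    exact AddCircle.addOrderOf_period_div (by norm_num)
  have htors : ∀ y, ∃ n : ℕ, 0 < n ∧ n • (show B →+ AddCircle (1 : ℚ) from c) y = 0 := by
    intro y
    induction (show B →+ AddCircle (1 : ℚ) from c) y using QuotientAddGroup.induction_on with
    | H r =>
    refine ⟨r.den, r.pos, ?_⟩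
    have : (((r.den • r : ℚ)) : AddCircle (1 : ℚ)) = 0 := by
      rw [AddCircle.coe_eq_zero_iff]
      exact ⟨r.num, by simp [Rat.den_mul_eq_num]⟩
    exact this
  rcases aux_primary (show B →+ AddCircle (1 : ℚ) from c) hJ htors 2 Nat.prime_two with h | h
  · obtain ⟨k, hk⟩ := h x
    have := addOrderOf_dvd_of_nsmul_eq_zero hk
    have h3 : 3 ∣ 2 ^ k := (show 3 ∣ 6 by norm_num).trans (hcx ▸ this)
    have := Nat.prime_three.dvd_of_dvd_pow h3
    omega
  · obtain ⟨k, hk2, hk⟩ := h x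
    have := addOrderOf_dvd_of_nsmul_eq_zero hk
    have h3 : 2 ∣ k := (show 2 ∣ 6 by norm_num).trans (hcx ▸ this)
    have := Nat.Coprime.eq_one_of_dvd hk2.symm h3
    omega

theorem aux_divisible {B : Type*} [AddCommGroup B]
    (hF : ∀ H : AddSubgroup B, H.FiniteIndex → H = ⊤) (n : ℕ) (hn : 0 < n) (y : B) :
    ∃ z, n • z = y := by
  by_contra hy
  let P : AddSubgroup B := (nsmulAddMonoidHom n : B →+ B).range
  have hyP : (QuotientAddGroup.mk' P) y ≠ 0 := by
    intro h
    rw [QuotientAddGroup.mk'_apply, QuotientAddGroup.eq_zero_iff] at h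
    exact hy h
  obtain ⟨c, hc⟩ := CharacterModule.exists_character_apply_ne_zero_of_ne_zero hyP
  let f : B →+ AddCircle (1 : ℚ) := (show B ⧸ P →+ AddCircle (1 : ℚ) from c).comp
    (QuotientAddGroup.mk' P)
  have hfin : Finite f.range := by
    have h1 := AddCircle.finite_torsion (1 : ℚ) hn
    refine Set.Finite.subset h1 ?_
    rintro _ ⟨b, rfl⟩
    change n • f b = 0
    rw [← map_nsmul]
    have : (QuotientAddGroup.mk' P) (n • b) = 0 := by
      rw [QuotientAddGroup.mk'_apply, QuotientAddGroup.eq_zero_iff]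
      exact ⟨b, rfl⟩
    change c (QuotientAddGroup.mk' P (n • b)) = 0
    rw [this]
    exact map_zero _
  have hk : f.ker = ⊤ := hF _ inferInstance
  have : y ∈ f.ker := hk ▸ AddSubgroup.mem_top y
  exact hc this

theorem aux_prufer {B : Type*} [AddCommGroup B] [Nontrivial B]
    (hJ : ∀ H K : AddSubgroup B, H ≠ ⊤ → K ≠ ⊤ → H ⊔ K ≠ ⊤)
    (hF : ∀ H : AddSubgroup B, H.FiniteIndex → H = ⊤) :
    ∃ (q : ℕ) (hq : q.Prime), Nonempty (B ≃+ PruferGroup q hq) := by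
  obtain ⟨x', hx'⟩ := exists_ne (0 : B)
  have hpos : 0 < addOrderOf x' := by
    obtain ⟨n, hn, h⟩ := aux_torsion hJ x'
    exact Nat.pos_of_dvd_of_pos (addOrderOf_dvd_of_nsmul_eq_zero h) hn
  obtain ⟨p, hp, hpd⟩ := Nat.exists_prime_and_dvd (n := addOrderOf x')
    (by rwa [Ne, AddMonoid.addOrderOf_eq_one_iff])
  haveI : Fact p.Prime := ⟨hp⟩
  have hprim : ∀ y : B, ∃ k : ℕ, p ^ k • y = 0 := by
    rcases aux_primary (AddMonoidHom.id B) hJ (fun y => aux_torsion hJ y) p hp with h | h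
    · exact h
    · obtain ⟨n, hn, h⟩ := h x'
      exact absurd (hpd.trans (addOrderOf_dvd_of_nsmul_eq_zero h))
        ((Nat.Prime.coprime_iff_not_dvd hp).1 hn.symm)
  obtain ⟨m, hm⟩ := hpd
  let x : B := m • x'
  have hx0 : x ≠ 0 := by
    intro h
    have h1 := addOrderOf_dvd_of_nsmul_eq_zero h
    have hm0 : 0 < m := by
      rcases Nat.eq_zero_or_pos m with h | h
      · rw [h, mul_zero] at hm; omega
      · exact h
    have := Nat.le_of_dvd hm0 h1
    have := hp.two_le
    nlinarith
  have hpx : p • x = 0 := by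
    change p • m • x' = 0
    rw [← mul_smul, ← hm, addOrderOf_nsmul_eq_zero]
  obtain ⟨c, hc⟩ := CharacterModule.exists_character_apply_ne_zero_of_ne_zero hx0
  let f : B →+ AddCircle (1 : ℚ) := c
  have hfx : f x ≠ 0 := hc
  choose d hd using fun y => aux_divisible hF p hp.pos y
  let s : ℕ → B := fun n => d^[n] x
  have hs : ∀ n, p • s (n + 1) = s n := by
    intro n
    simp only [s, Function.iterate_succ_apply']
    exact hd _
  have hsn : ∀ n, p ^ n • s n = x := by
    intro n
    induction n with
    | zero => simp [s]
    | succ n ih => rw [pow_succ, mul_smul, hs, ih]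
  have hord : ∀ n, addOrderOf (s n) = p ^ (n + 1) := by
    intro n
    apply addOrderOf_eq_prime_pow
    · rw [hsn]; exact hx0
    · rw [pow_succ', mul_smul, hsn, hpx]
  have hordf : ∀ n, addOrderOf (f (s n)) = p ^ (n + 1) := by
    intro n
    apply addOrderOf_eq_prime_pow
    · rw [← map_nsmul, hsn]; exact hfx
    · rw [← map_nsmul, pow_succ', mul_smul, hsn, hpx, map_zero]
  have hle : Monotone (fun n => AddSubgroup.zmultiples (s n)) := by
    apply monotone_nat_of_le_succ
    intro n
    rw [AddSubgroup.zmultiples_le, ← hs n]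
    exact AddSubgroup.nsmul_mem _ (AddSubgroup.mem_zmultiples _) _
  let D : AddSubgroup B := ⨆ n, AddSubgroup.zmultiples (s n)
  have hmemD : ∀ y, y ∈ D ↔ ∃ n, y ∈ AddSubgroup.zmultiples (s n) := fun y =>
    AddSubgroup.mem_iSup_of_directed hle.directed_le
  have hsurj : ∀ z : AddCircle (1 : ℚ), (∃ k : ℕ, p ^ k • z = 0) → ∃ y ∈ D, f y = z := by
    rintro z ⟨k, hk⟩
    obtain ⟨a, ha⟩ := aux_circle (pow_pos hp.pos (k + 1)) (hordf k)
      (by rw [pow_succ', mul_smul, hk, smul_zero] : p ^ (k + 1) • z = 0)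
    refine ⟨a • s k, (hmemD _).2 ⟨k, a, rfl⟩, ?_⟩
    rw [map_zsmul]; exact ha
  have hDtop : D = ⊤ := by
    by_contra hD
    refine hJ f.ker D ?_ hD ?_
    · intro h
      have : x ∈ f.ker := h ▸ AddSubgroup.mem_top x
      exact hfx this
    · rw [eq_top_iff]
      intro y _
      obtain ⟨k, hk⟩ := hprim y
      obtain ⟨w, hw, hwy⟩ := hsurj (f y) ⟨k, by rw [← map_nsmul, hk, map_zero]⟩
      have : y = (y - w) + w := by abel
      rw [this]
      refine AddSubgroup.add_mem_sup ?_ hw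
      rw [AddMonoidHom.mem_ker, map_sub, hwy, sub_self]
  have hinj : Function.Injective f := by
    rw [injective_iff_map_eq_zero]
    intro y hy
    obtain ⟨n, a, rfl⟩ := (hmemD y).1 (hDtop ▸ AddSubgroup.mem_top y)
    simp only [map_zsmul] at hy ⊢
    rw [← addOrderOf_dvd_iff_zsmul_eq_zero, hordf] at hy
    exact addOrderOf_dvd_iff_zsmul_eq_zero.1 (by rw [hord]; exact hy)
  refine ⟨p, hp, ⟨AddEquiv.ofBijective (f.codRestrict (PruferGroup p hp) ?_) ⟨?_, ?_⟩⟩⟩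
  · intro y
    obtain ⟨k, hk⟩ := hprim y
    exact ⟨k, by rw [← map_nsmul, hk, map_zero]⟩
  · intro a b hab
    exact hinj (congrArg Subtype.val hab)
  · rintro ⟨z, k, hk⟩
    obtain ⟨y, -, hy⟩ := hsurj z ⟨k, hk⟩
    exact ⟨y, Subtype.ext hy⟩

theorem aux_noncyclic {G : Type*} [Group G] [Infinite G]
    (hJ : ∀ H K : Subgroup G, H ≠ ⊤ → K ≠ ⊤ → H ⊔ K ≠ ⊤) (g : G) :
    Subgroup.zpowers g ≠ ⊤ := by
  intro hg
  have hinf : orderOf g = 0 := by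
    rw [← Nat.card_zpowers, hg]
    simp
  have hne : ∀ n : ℕ, 1 < n → Subgroup.zpowers (g ^ n) ≠ ⊤ := by
    intro n hn h
    have : g ∈ Subgroup.zpowers (g ^ n) := h ▸ Subgroup.mem_top g
    obtain ⟨k, hk⟩ := this
    have h1 : g ^ ((n : ℤ) * k - 1) = 1 := by
      rw [zpow_sub, zpow_mul, zpow_natCast, zpow_one]
      simp only at hk
      rw [hk, mul_inv_cancel]
    rw [← orderOf_dvd_iff_zpow_eq_one, hinf] at h1
    have h2 : (n : ℤ) * k = 1 := by
      have := zero_dvd_iff.1 (by simpa only [Nat.cast_zero] using h1)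
      linarith
    have := Int.eq_one_or_neg_one_of_mul_eq_one h2
    omega
  refine hJ _ _ (hne 2 (by norm_num)) (hne 3 (by norm_num)) ?_
  rw [eq_top_iff, ← hg, Subgroup.zpowers_le]
  have : g = (g ^ 2)⁻¹ * g ^ 3 := by group
  have h3 : (g ^ 2)⁻¹ * g ^ 3 ∈ Subgroup.zpowers (g ^ 2) ⊔ Subgroup.zpowers (g ^ 3) :=
    Subgroup.mul_mem_sup (Subgroup.inv_mem _ (Subgroup.mem_zpowers _)) (Subgroup.mem_zpowers _)
  rwa [← this] at h3

theorem aux_finiteIndex {G : Type*} [Group G] [Infinite G]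
    (hJ : ∀ H K : Subgroup G, H ≠ ⊤ → K ≠ ⊤ → H ⊔ K ≠ ⊤) (N : Subgroup G)
    (hN : N.FiniteIndex) : N = ⊤ := by
  by_contra hne
  have key : ∀ S : Set G, S.Finite → N ⊔ Subgroup.closure S ≠ ⊤ := by
    intro S hS
    induction S, hS using Set.Finite.induction_on with
    | empty => simpa using hne
    | @insert a S _ _ ih =>
      rw [Set.insert_eq, Subgroup.closure_union, ← Subgroup.zpowers_eq_closure,
        sup_left_comm]
      exact hJ _ _ (aux_noncyclic hJ a) ih
  have hq : Finite (G ⧸ N) := inferInstance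
  refine key (Set.range (Quotient.out : G ⧸ N → G)) (@Set.finite_range _ _ _ hq) ?_
  rw [eq_top_iff]
  intro g _
  obtain ⟨h, hh⟩ := QuotientGroup.mk_out_eq_mul N g
  have : g = (g * h) * (h : G)⁻¹ := by group
  rw [this, ← hh]
  refine mul_mem (Subgroup.mem_sup_right (Subgroup.subset_closure ⟨_, rfl⟩))
    (Subgroup.mem_sup_left (inv_mem h.2))

/-- Theorem 2.3: let `A` be an `RG`-module where `G` is an infinite group with `G ≠ G'`
acting faithfully (`C_G(A) = 1`). If `A/C_A(G)` is an infinite `R`-module and `A/C_A(H)`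
is a finite `R`-module for every proper subgroup `H` of `G`, then `G` is isomorphic to a
quasi-cyclic `q`-group for some prime `q`. -/
theorem finite_proper_subgroups_prufer (R : Type*) [Ring R] (G : Type*) [Group G] [Infinite G]
    (A : Type*) [AddCommGroup A] [Module R A] [DistribMulAction G A] [SMulCommClass G R A]
    (hG' : commutator G ≠ ⊤)
    (hfaith : ∀ g : G, (∀ a : A, g • a = a) → g = 1)
    (hG : Infinite (A ⧸ moduleCentralizer R A (⊤ : Subgroup G)))
    (hH : ∀ H : Subgroup G, H ≠ ⊤ → Finite (A ⧸ moduleCentralizer R A H)) :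
    ∃ (q : ℕ) (hq : q.Prime), Nonempty (G ≃* Multiplicative (PruferGroup q hq)) := by
  have hJ : ∀ H K : Subgroup G, H ≠ ⊤ → K ≠ ⊤ → H ⊔ K ≠ ⊤ := by
    intro H K h1 h2 h
    have f1 := hH H h1
    have f2 := hH K h2
    let φ : A →ₗ[R] (A ⧸ moduleCentralizer R A H) × (A ⧸ moduleCentralizer R A K) :=
      (Submodule.mkQ _).prod (Submodule.mkQ _)
    have hker : φ.ker = moduleCentralizer R A (⊤ : Subgroup G) := by
      rw [LinearMap.ker_prod, Submodule.ker_mkQ, Submodule.ker_mkQ]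
      ext a
      constructor
      · rintro ⟨ha, hb⟩ g -
        have hle : H ⊔ K ≤ MulAction.stabilizer G a := sup_le ha hb
        exact hle (h ▸ Subgroup.mem_top g)
      · intro ha
        exact ⟨fun g _ => ha g trivial, fun g _ => ha g trivial⟩
    have : Finite (A ⧸ φ.ker) := Finite.of_injective _ φ.quotKerEquivRange.injective
    rw [hker] at this
    exact not_finite (A ⧸ moduleCentralizer R A (⊤ : Subgroup G))
  have hnorm : ∀ H : Subgroup G, H.Normal → H ≠ ⊤ → ∀ (g : G) (a : A),
      g • a - a ∈ moduleCentralizer R A H := by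
    intro H hHn hHt g a
    have f1 := hH H hHt
    have hinv : ∀ (g : G) (b : A), b ∈ moduleCentralizer R A H →
        g • b ∈ moduleCentralizer R A H := by
      intro g b hb k hk
      have h1 := hb (g⁻¹ * k * g) (by simpa using hHn.conj_mem k hk g⁻¹)
      rw [mul_smul, mul_smul, inv_smul_eq_iff] at h1
      exact h1
    let S : Subgroup G :=
      { carrier := {g | g • a - a ∈ moduleCentralizer R A H}
        one_mem' := by simp
        mul_mem' := by
          intro u v hu hv
          have := add_mem (hinv u _ hv) hu
          simpa [smul_sub, mul_smul] using this
        inv_mem' := by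
          intro u hu
          have := neg_mem (hinv u⁻¹ _ hu)
          simpa [smul_sub] using this }
    have hS : S.FiniteIndex := by
      let φ : G → A ⧸ moduleCentralizer R A H := fun g => Submodule.Quotient.mk (g • a)
      have hφ : ∀ u v : G, φ u = φ v → (u : G ⧸ S) = v := by
        intro u v huv
        rw [QuotientGroup.eq]
        have h1 : u • a - v • a ∈ moduleCentralizer R A H :=
          (Submodule.Quotient.eq _).1 huv
        have h2 := neg_mem (hinv u⁻¹ _ h1)
        change (u⁻¹ * v) • a - a ∈ moduleCentralizer R A H
        simpa [smul_sub, mul_smul] using h2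
      have : Finite (G ⧸ S) := by
        refine Finite.of_injective (fun q : G ⧸ S => φ q.out) ?_
        intro q r hqr
        have := hφ _ _ hqr
        simpa using this
      exact Subgroup.finiteIndex_of_finite_quotient
    have hST : S = ⊤ := aux_finiteIndex hJ S hS
    have : g ∈ S := hST ▸ Subgroup.mem_top g
    exact this
  have hfix : ∀ (g h : G) (a : A), h • (g • a - a) = g • a - a := by
    intro g h a
    have hn : (commutator G ⊔ Subgroup.zpowers h).Normal :=
      Subgroup.Normal.of_commutator_le G le_sup_left
    exact hnorm _ hn (hJ _ _ hG' (aux_noncyclic hJ h)) g a h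
      (Subgroup.mem_sup_right (Subgroup.mem_zpowers h))
  have hcomm : ∀ g h : G, g * h = h * g := by
    intro g h
    have : (h * g)⁻¹ * (g * h) = 1 := by
      apply hfaith
      intro a
      rw [mul_smul, inv_smul_eq_iff, mul_smul, mul_smul]
      have h1 := hfix g h a
      have h2 := hfix h g a
      rw [smul_sub] at h1 h2
      rw [sub_eq_iff_eq_add.1 h1, sub_eq_iff_eq_add.1 h2]
      abel
    exact (inv_mul_eq_one.1 this).symm
  let _ : CommGroup G := { (inferInstance : Group G) with mul_comm := hcomm }
  obtain ⟨q, hq, ⟨e⟩⟩ := aux_prufer (B := Additive G) (by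
      intro H K h1 h2 h
      refine hJ (AddSubgroup.toSubgroup' H) (AddSubgroup.toSubgroup' K) ?_ ?_ ?_
      · simpa using h1
      · simpa using h2
      · rw [← map_sup, h, map_top]) (by
      intro H h
      have h' : (AddSubgroup.toSubgroup' H).FiniteIndex := ⟨h.index_ne_zero⟩
      simpa using aux_finiteIndex hJ _ h')
  exact ⟨q, hq, ⟨AddEquiv.toMultiplicativeRight e⟩⟩
end
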